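/- arXiv:2110.08879 — 10 statements merged into one kernel-verified Lean document; each statement's English description precedes it below -/
import Mathlib

section
/- For every toll vector p ∈ ℝ^R there exists a unique stochastic user equilibrium x̄(p), and it is characterized as follows: the optimization problem of minimizing Φ_p(y) = Σ_{i=1}^R (∫_0^{y_i} ℓ_i(s) ds + p_i y_i) + (1/β) Σ_{i=1}^R y_i ln(y_i) over the feasible set Δ has a unique optimal solution, and a vector y ∈ Δ with strictly positive coordinates is optimal for this problem if and only if y = h(y,p). In particular, the unique minimizer equals x̄(p). -/
/-!
Write `M = lam / mu`. Taking logarithms, `x = h x p` holds iff `x` is positive, sums to `M`, and the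
marginal costs `ℓ i (x i) + p i + (1 / β) * log (x i)` take a common value `c`
(`equilibrium_conditions` and `fixed_of_conditions` are the two directions). This is the first-order
condition for `Φ` on the simplex.

* Existence (`exists_equal_marginals`): after the substitution `x i = exp t`, each marginal cost is
  an increasing bijection of `ℝ`, so `x i` is a continuous increasing function of `c`; the
  intermediate value theorem produces a `c` for which the total is `M`.
* Everything else: `Φ` is a sum of strictly convex functions of one variable, so the tangent-line
  inequality (`tangent_lt`), summed over the links, shows that a fixed point is the strict minimizer
  of `Φ` over the simplex. Hence fixed points and minimizers are both unique and coincide.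
-/

open Real

open Filter

/-- Tangent-line inequality for the primitive of a monotone function. -/
lemma integral_tangent_le {f : ℝ → ℝ} (hf : Monotone f) (hc : Continuous f) (x y : ℝ) :
    (∫ s in (0:ℝ)..x, f s) + f x * (y - x) ≤ ∫ s in (0:ℝ)..y, f s := by
  have hadd := intervalIntegral.integral_add_adjacent_intervals
    (hc.intervalIntegrable (μ := MeasureTheory.volume) 0 x) (hc.intervalIntegrable x y)
  rcases le_total x y with hxy | hxy
  · have := intervalIntegral.integral_mono_on (μ := MeasureTheory.volume) hxy
      (continuous_const (y := f x) |>.intervalIntegrable x y)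
      (hc.intervalIntegrable x y) (fun s hs => hf hs.1)
    rw [intervalIntegral.integral_const, smul_eq_mul] at this
    linarith
  · have := intervalIntegral.integral_mono_on (μ := MeasureTheory.volume) hxy
      (hc.intervalIntegrable y x)
      (continuous_const (y := f x) |>.intervalIntegrable y x) (fun s hs => hf hs.2)
    rw [intervalIntegral.integral_const, smul_eq_mul] at this
    rw [intervalIntegral.integral_symm y x] at hadd
    linarith

/-- Strict tangent-line inequality for `u * log u`, including the endpoint `y = 0`. -/
lemma mul_log_tangent_lt {x y : ℝ} (hx : 0 < x) (hy : 0 ≤ y) (hne : y ≠ x) :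
    x * log x + (log x + 1) * (y - x) < y * log y := by
  rcases hy.eq_or_lt with rfl | hy
  · simp only [zero_mul]
    linarith
  · have h1 := log_lt_sub_one_of_pos (div_pos hx hy)
      (fun h => hne ((div_eq_one_iff_eq hy.ne').1 h).symm)
    rw [log_div hx.ne' hy.ne'] at h1
    have h2 := mul_lt_mul_of_pos_left h1 hy
    have h3 : y * (x / y - 1) = x - y := by field_simp
    rw [h3] at h2
    linarith

/-- Strict tangent-line inequality for one summand of the potential; the slope at `x` is the
marginal cost of the link plus the constant `1 / β`. -/
lemma tangent_lt {f : ℝ → ℝ} (hf : Monotone f) (hc : Continuous f) {β : ℝ} (hβ : 0 < β) (q : ℝ)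
    {x y : ℝ} (hx : 0 < x) (hy : 0 ≤ y) (hne : y ≠ x) :
    ((∫ s in (0:ℝ)..x, f s) + q * x) + 1 / β * (x * log x)
      + (f x + q + 1 / β * log x + 1 / β) * (y - x)
      < ((∫ s in (0:ℝ)..y, f s) + q * y) + 1 / β * (y * log y) := by
  have h1 := integral_tangent_le hf hc x y
  have h2 := mul_lt_mul_of_pos_left (mul_log_tangent_lt hx hy hne) (one_div_pos.2 hβ)
  linarith

/-- In the variable `t = log u`, the marginal cost is an increasing bijection of the line. -/
lemma marginal_bijective {f : ℝ → ℝ} (hf : Monotone f) (hc : Continuous f) {β : ℝ} (hβ : 0 < β)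
    (q : ℝ) :
    StrictMono (fun t : ℝ => f (exp t) + q + 1 / β * t) ∧
      Function.Surjective (fun t : ℝ => f (exp t) + q + 1 / β * t) := by
  have hb : 0 < 1 / β := one_div_pos.2 hβ
  refine ⟨fun s t hst => ?_, Continuous.surjective (by fun_prop) ?_ ?_⟩
  · have h1 := hf (exp_le_exp.2 hst.le)
    have h2 := mul_lt_mul_of_pos_left hst hb
    dsimp only
    linarith
  · refine tendsto_atTop_mono (f := fun t : ℝ => (f 0 + q) + 1 / β * t) (fun t => ?_)
      (tendsto_atTop_add_const_left _ _ (tendsto_id.const_mul_atTop hb))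
    have := hf (exp_pos t).le
    linarith
  · refine tendsto_atBot_mono' atBot (f₁ := fun t : ℝ => (f 1 + q) + 1 / β * t) ?_
      (tendsto_atBot_add_const_left _ _ (tendsto_id.const_mul_atBot hb))
    filter_upwards [eventually_le_atBot (0:ℝ)] with t ht
    have := hf (exp_le_one_iff.2 ht)
    linarith

/-- There is a positive flow of total mass `M` at which all marginal costs are equal. -/
lemma exists_equal_marginals {R : ℕ} (hR : 1 ≤ R) {β M : ℝ} (hβ : 0 < β) (hM : 0 < M)
    {ℓ : Fin R → ℝ → ℝ} (hmono : ∀ i, Monotone (ℓ i)) (hc : ∀ i, Continuous (ℓ i))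
    (p : Fin R → ℝ) :
    ∃ (x : Fin R → ℝ) (c : ℝ), (∀ i, 0 < x i) ∧ ∑ i, x i = M ∧
      ∀ i, ℓ i (x i) + p i + 1 / β * log (x i) = c := by
  have hR0 : (0:ℝ) < R := by exact_mod_cast hR
  let g : Fin R → ℝ ≃o ℝ := fun i =>
    (marginal_bijective (hmono i) (hc i) hβ (p i)).1.orderIsoOfSurjective _
      (marginal_bijective (hmono i) (hc i) hβ (p i)).2
  have hg : ∀ i t, g i t = ℓ i (exp t) + p i + 1 / β * t := fun i t => rfl
  let F : ℝ → ℝ := fun c => ∑ i, exp ((g i).symm c)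
  have hF : Continuous F :=
    continuous_finsetSum _ fun i _ => continuous_exp.comp (g i).symm.continuous
  -- Below every `g i (log (M / R))` each link carries at most `M / R`.
  obtain ⟨a, ha⟩ := (Set.finite_range fun i => g i (log (M / R))).bddBelow
  -- Above every `g i (log M)` each single link already carries at least `M`.
  obtain ⟨b, hb⟩ := (Set.finite_range fun i => g i (log M)).bddAbove
  have hFa : F a ≤ M := by
    have : ∀ i ∈ Finset.univ, exp ((g i).symm a) ≤ M / R := fun i _ => by
      rw [← exp_log (div_pos hM hR0), exp_le_exp, OrderIso.symm_apply_le]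
      exact ha ⟨i, rfl⟩
    refine (Finset.sum_le_sum this).trans_eq ?_
    rw [Finset.sum_const, Finset.card_univ, Fintype.card_fin, nsmul_eq_mul]
    field_simp
  have hFb : M ≤ F b := by
    have h0 : M ≤ exp ((g ⟨0, hR⟩).symm b) := by
      rw [← log_le_iff_le_exp hM, OrderIso.le_symm_apply]
      exact hb ⟨_, rfl⟩
    exact h0.trans (Finset.single_le_sum (f := fun i => exp ((g i).symm b))
      (fun i _ => (exp_pos _).le) (Finset.mem_univ _))
  obtain ⟨c, hcM⟩ := mem_range_of_exists_le_of_exists_ge hF ⟨a, hFa⟩ ⟨b, hFb⟩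
  refine ⟨fun i => exp ((g i).symm c), c, fun i => exp_pos _, hcM, fun i => ?_⟩
  rw [log_exp, ← hg, OrderIso.apply_symm_apply]

/-- Positive flows of total mass `M` with equal marginal costs are logit fixed points. -/
lemma fixed_of_conditions {R : ℕ} {β M : ℝ} (hβ : 0 < β) (hM : 0 < M) {ℓ : Fin R → ℝ → ℝ}
    {p x : Fin R → ℝ} {c : ℝ} (hx : ∀ i, 0 < x i) (hsum : ∑ i, x i = M)
    (hcond : ∀ i, ℓ i (x i) + p i + 1 / β * log (x i) = c) (i : Fin R) :
    x i = M * exp (-β * (ℓ i (x i) + p i)) / ∑ j, exp (-β * (ℓ j (x j) + p j)) := by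
  have key : ∀ j, exp (-β * (ℓ j (x j) + p j)) = x j * exp (-β * c) := fun j => by
    have h1 : -β * (ℓ j (x j) + p j) = log (x j) + -β * c := by
      rw [← hcond j]
      field_simp
      ring
    rw [h1, exp_add, exp_log (hx j)]
  rw [key i, Finset.sum_congr rfl fun j _ => key j, ← Finset.sum_mul, hsum]
  generalize hE : exp (-β * c) = E
  have hE0 : E ≠ 0 := hE ▸ (exp_pos _).ne'
  field_simp

/-- Logit fixed points are positive, have total mass `M` and equalize the marginal costs. -/
lemma equilibrium_conditions {R : ℕ} (hR : 1 ≤ R) {β M : ℝ} (hβ : 0 < β) (hM : 0 < M)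
    {ℓ : Fin R → ℝ → ℝ} {p x : Fin R → ℝ}
    (hfix : ∀ i, x i = M * exp (-β * (ℓ i (x i) + p i)) / ∑ j, exp (-β * (ℓ j (x j) + p j))) :
    (∀ i, 0 < x i) ∧ ∑ i, x i = M ∧
      ∃ c, ∀ i, ℓ i (x i) + p i + 1 / β * log (x i) = c := by
  set S := ∑ j, exp (-β * (ℓ j (x j) + p j)) with hS
  have hSpos : 0 < S := Finset.sum_pos (fun j _ => exp_pos _) ⟨⟨0, hR⟩, Finset.mem_univ _⟩
  refine ⟨fun i => ?_, ?_, 1 / β * (log M - log S), fun i => ?_⟩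
  · rw [hfix i]
    exact div_pos (mul_pos hM (exp_pos _)) hSpos
  · rw [Finset.sum_congr rfl fun i _ => hfix i, ← Finset.sum_div, ← Finset.mul_sum, ← hS]
    exact mul_div_cancel_right₀ M hSpos.ne'
  · have hlog : log (x i) = log M + -β * (ℓ i (x i) + p i) - log S := by
      conv_lhs => rw [hfix i]
      rw [log_div (mul_pos hM (exp_pos _)).ne' hSpos.ne', log_mul hM.ne' (exp_pos _).ne', log_exp]
    rw [hlog]
    generalize ℓ i (x i) + p i = d
    field_simp
    ring

/-- For every toll vector `p` there exists a unique stochastic user equilibrium, and it is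
characterized as the unique minimizer of the potential `Φ` over the simplex `Δ`; a feasible
vector with strictly positive coordinates is optimal iff it is a fixed point of `h (·, p)`. -/
theorem stmt_0
    (R : ℕ) (hR : 1 ≤ R)
    (β lam mu : ℝ) (hβ : 0 < β) (hlam : 0 < lam) (hmu : 0 < mu) (hmu1 : mu < 1)
    (ℓ ℓ' : Fin R → ℝ → ℝ)
    (hderiv : ∀ i x, HasDerivAt (ℓ i) (ℓ' i x) x)
    (hcont : ∀ i, Continuous (ℓ' i))
    (hpos : ∀ i x, 0 < ℓ' i x)
    (hconv : ∀ i, Monotone (ℓ' i))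
    (h : (Fin R → ℝ) → (Fin R → ℝ) → Fin R → ℝ)
    (hdef : ∀ x p i, h x p i =
      (lam / mu) * Real.exp (-β * (ℓ i (x i) + p i)) /
        ∑ j, Real.exp (-β * (ℓ j (x j) + p j)))
    (Δ : Set (Fin R → ℝ))
    (hΔ : Δ = {y | (∀ i, 0 ≤ y i) ∧ ∑ i, y i = lam / mu})
    (p : Fin R → ℝ)
    (Φ : (Fin R → ℝ) → ℝ)
    (hΦ : ∀ y, Φ y = (∑ i, ((∫ s in (0:ℝ)..(y i), ℓ i s) + p i * y i))
        + (1 / β) * ∑ i, y i * Real.log (y i)) :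
    (∃! x : Fin R → ℝ, x = h x p) ∧
    (∃! y, y ∈ Δ ∧ IsMinOn Φ Δ y) ∧
    (∀ y ∈ Δ, (∀ i, 0 < y i) → (IsMinOn Φ Δ y ↔ y = h y p)) ∧
    (∀ x y : Fin R → ℝ, x = h x p → y ∈ Δ → IsMinOn Φ Δ y → y = x) := by
  have hM : 0 < lam / mu := div_pos hlam hmu
  have hc : ∀ i, Continuous (ℓ i) := fun i =>
    continuous_iff_continuousAt.2 fun x => (hderiv i x).continuousAt
  have hmono : ∀ i, Monotone (ℓ i) := fun i =>
    (strictMono_of_hasDerivAt_pos (hderiv i) (hpos i)).monotone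
  have hmem : ∀ x, x = h x p → x ∈ Δ := fun x hx => by
    obtain ⟨h1, h2, -⟩ := equilibrium_conditions hR hβ hM
      (fun i => (congrFun hx i).trans (hdef x p i))
    rw [hΔ]
    exact ⟨fun i => (h1 i).le, h2⟩
  -- A fixed point strictly minimizes `Φ`: the tangent slopes are all equal, and both points have
  -- the same total, so the linear terms cancel after summation.
  have hstrict : ∀ x y, x = h x p → y ∈ Δ → y ≠ x → Φ x < Φ y := fun x y hx hy hne => by
    obtain ⟨h1, h2, c, h3⟩ :=
      equilibrium_conditions hR hβ hM (fun i => (congrFun hx i).trans (hdef x p i))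
    rw [hΔ] at hy
    obtain ⟨hy0, hysum⟩ := hy
    obtain ⟨k, hk⟩ := Function.ne_iff.1 hne
    have hlt := Finset.sum_lt_sum (s := Finset.univ)
      (f := fun i => ((∫ s in (0:ℝ)..x i, ℓ i s) + p i * x i) + 1 / β * (x i * Real.log (x i))
        + (c + 1 / β) * (y i - x i))
      (g := fun i => ((∫ s in (0:ℝ)..y i, ℓ i s) + p i * y i) + 1 / β * (y i * Real.log (y i)))
      (fun i _ => by
        by_cases hi : y i = x i
        · simp [hi]
        · have := tangent_lt (hmono i) (hc i) hβ (p i) (h1 i) (hy0 i) hi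
          rw [h3 i] at this
          exact this.le)
      ⟨k, Finset.mem_univ k, by
        have := tangent_lt (hmono k) (hc k) hβ (p k) (h1 k) (hy0 k) hk
        rwa [h3 k] at this⟩
    simp only [Finset.sum_add_distrib, ← Finset.mul_sum, Finset.sum_sub_distrib, h2, hysum,
      sub_self, mul_zero, add_zero] at hlt
    simpa only [hΦ, Finset.sum_add_distrib] using hlt
  have hmin : ∀ x, x = h x p → IsMinOn Φ Δ x := fun x hx => isMinOn_iff.2 fun y hy => by
    by_cases hyx : y = x
    · rw [hyx]
    · exact (hstrict x y hx hy hyx).le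
  have huniq : ∀ x y, x = h x p → y ∈ Δ → IsMinOn Φ Δ y → y = x := fun x y hx hy hymin => by
    by_contra hne
    exact absurd (isMinOn_iff.1 hymin x (hmem x hx)) (not_le.2 (hstrict x y hx hy hne))
  obtain ⟨x, c, h1, h2, h3⟩ := exists_equal_marginals hR hβ hM hmono hc p
  have hx : x = h x p := funext fun i => by
    rw [hdef]
    exact fixed_of_conditions hβ hM h1 h2 h3 i
  refine ⟨⟨x, hx, fun y hy => huniq x y hx (hmem y hy) (hmin y hy)⟩,
    ⟨x, ⟨hmem x hx, hmin x hx⟩, fun y hy => huniq x y hx hy.1 hy.2⟩,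
    fun y hy _ => ⟨fun hymin => ?_, hmin y⟩, huniq⟩
  rw [huniq x y hx hy hymin]
  exact hx
end

section
/- Monotonicity of the stochastic user equilibrium in the tolls: for any two toll vectors p, p' ∈ ℝ^R, the inner product ⟨x̄(p) − x̄(p'), p − p'⟩ ≤ 0, and the inequality is strict whenever x̄(p) ≠ x̄(p'). -/
open Real

/-!
Taking logarithms in the fixed-point equation `x̄ = h(x̄, p)` inverts the equilibrium map up to an
additive constant common to all links:
`p i = C - (log (x̄ i) / β + ℓ i (x̄ i))`.
Both equilibria have the same total mass, so the difference of these constants contributes nothing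
to `⟨x̄(p) - x̄(p'), p - p'⟩`, which is therefore minus a sum of terms
`(a - b) * (g i a - g i b)` with `g i t = log t / β + ℓ i t` strictly increasing on `(0, ∞)`.
-/

/-- A logit fixed point determines the tolls up to a constant common to all links. -/
lemma exists_toll_eq {R : ℕ} {β c : ℝ} (hβ : 0 < β) (hc : 0 < c)
    (ℓ : Fin R → ℝ → ℝ) (x p : Fin R → ℝ)
    (hx : ∀ i, x i = c * Real.exp (-β * (ℓ i (x i) + p i)) /
      ∑ j, Real.exp (-β * (ℓ j (x j) + p j))) :
    ∃ C : ℝ, ∀ i, p i = C - (Real.log (x i) / β + ℓ i (x i)) := by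
  refine ⟨(Real.log c - Real.log (∑ j, Real.exp (-β * (ℓ j (x j) + p j)))) / β, fun i => ?_⟩
  have hS : 0 < ∑ j, Real.exp (-β * (ℓ j (x j) + p j)) :=
    Finset.sum_pos (fun j _ => Real.exp_pos _) ⟨i, Finset.mem_univ i⟩
  have hlog := congrArg Real.log (hx i)
  rw [Real.log_div (mul_pos hc (Real.exp_pos _)).ne' hS.ne',
    Real.log_mul hc.ne' (Real.exp_pos _).ne', Real.log_exp] at hlog
  rw [hlog]
  field_simp
  ring

lemma mul_sub_pos_of_strictMonoOn {g : ℝ → ℝ} {s : Set ℝ} (hg : StrictMonoOn g s) {a b : ℝ}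
    (ha : a ∈ s) (hb : b ∈ s) (hab : a ≠ b) : 0 < (a - b) * (g a - g b) := by
  rcases lt_or_gt_of_ne hab with hlt | hgt
  · exact mul_pos_of_neg_of_neg (sub_neg.2 hlt) (sub_neg.2 (hg ha hb hlt))
  · exact mul_pos (sub_pos.2 hgt) (sub_pos.2 (hg hb ha hgt))

/-- Monotonicity of the stochastic user equilibrium in the tolls:
`⟨x̄(p) − x̄(p'), p − p'⟩ ≤ 0`, strictly whenever `x̄(p) ≠ x̄(p')`. -/
theorem stmt_2
    (R : ℕ) (hR : 1 ≤ R)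
    (β lam mu : ℝ) (hβ : 0 < β) (hlam : 0 < lam) (hmu : 0 < mu) (hmu1 : mu < 1)
    (ℓ ℓ' : Fin R → ℝ → ℝ)
    (hderiv : ∀ i x, HasDerivAt (ℓ i) (ℓ' i x) x)
    (hcont : ∀ i, Continuous (ℓ' i))
    (hpos : ∀ i x, 0 < ℓ' i x)
    (hconv : ∀ i, Monotone (ℓ' i))
    (h : (Fin R → ℝ) → (Fin R → ℝ) → Fin R → ℝ)
    (hdef : ∀ x p i, h x p i =
      (lam / mu) * Real.exp (-β * (ℓ i (x i) + p i)) /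
        ∑ j, Real.exp (-β * (ℓ j (x j) + p j)))
    (xbar : (Fin R → ℝ) → Fin R → ℝ)
    (hfix : ∀ p, xbar p = h (xbar p) p)
    (huniq : ∀ p x, x = h x p → x = xbar p)
    (hxpos : ∀ p i, 0 < xbar p i)
    (hxsum : ∀ p, ∑ i, xbar p i = lam / mu) :
    ∀ p p' : Fin R → ℝ,
      (∑ i, (xbar p i - xbar p' i) * (p i - p' i) ≤ 0) ∧
      (xbar p ≠ xbar p' → ∑ i, (xbar p i - xbar p' i) * (p i - p' i) < 0) := by
  intro p p'
  have hc : 0 < lam / mu := div_pos hlam hmu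
  have hlogit : ∀ q i, xbar q i = (lam / mu) * Real.exp (-β * (ℓ i (xbar q i) + q i)) /
      ∑ j, Real.exp (-β * (ℓ j (xbar q j) + q j)) :=
    fun q i => (congrFun (hfix q) i).trans (hdef _ _ _)
  obtain ⟨C, hC⟩ := exists_toll_eq hβ hc ℓ (xbar p) p (hlogit p)
  obtain ⟨C', hC'⟩ := exists_toll_eq hβ hc ℓ (xbar p') p' (hlogit p')
  let g : Fin R → ℝ → ℝ := fun i t => Real.log t / β + ℓ i t
  have hg : ∀ i, StrictMonoOn (g i) (Set.Ioi 0) := by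
    intro i a ha b hb hab
    have hℓ : StrictMono (ℓ i) :=
      strictMono_of_deriv_pos fun t => by rw [(hderiv i t).deriv]; exact hpos i t
    exact add_lt_add (div_lt_div_of_pos_right (Real.log_lt_log ha hab) hβ) (hℓ hab)
  have hterm : ∀ i, xbar p i ≠ xbar p' i →
      0 < (xbar p i - xbar p' i) * (g i (xbar p i) - g i (xbar p' i)) :=
    fun i hi => mul_sub_pos_of_strictMonoOn (hg i) (hxpos p i) (hxpos p' i) hi
  have hterm0 : ∀ i, 0 ≤ (xbar p i - xbar p' i) * (g i (xbar p i) - g i (xbar p' i)) := by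
    intro i
    by_cases hi : xbar p i = xbar p' i
    · simp [hi]
    · exact (hterm i hi).le
  have hsum : ∑ i, (xbar p i - xbar p' i) * (p i - p' i) =
      -∑ i, (xbar p i - xbar p' i) * (g i (xbar p i) - g i (xbar p' i)) := by
    have hzero : ∑ i, (xbar p i - xbar p' i) * (C - C') = 0 := by
      rw [← Finset.sum_mul, Finset.sum_sub_distrib, hxsum, hxsum, sub_self, zero_mul]
    rw [← zero_sub, ← hzero, ← Finset.sum_sub_distrib]
    refine Finset.sum_congr rfl fun i _ => ?_
    have hp : p i - p' i = (C - C') - (g i (xbar p i) - g i (xbar p' i)) := by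
      simp only [g]
      linarith [hC i, hC' i]
    rw [hp]
    ring
  rw [hsum]
  refine ⟨neg_nonpos.2 (Finset.sum_nonneg fun i _ => hterm0 i), fun hne => neg_lt_zero.2 ?_⟩
  obtain ⟨i, hi⟩ := Function.ne_iff.1 hne
  exact Finset.sum_pos' (fun i _ => hterm0 i) ⟨i, Finset.mem_univ i, hterm i hi⟩
end

section
/- The stochastic user equilibrium map p ↦ x̄(p) is continuously differentiable on ℝ^R, and for every p ∈ ℝ^R and every link i, the diagonal partial derivative satisfies ∂x̄_i(p)/∂p_i < 0. -/
/-!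
Taking logarithms, a positive vector `x` with `∑ xᵢ = c` (`c = lam / mu`) is an equilibrium for `p`
iff the quantity `log xᵢ + β ℓᵢ(xᵢ) + β pᵢ` has the same value `s` for every link `i`, that is, iff
`equilibriumMap β ℓ (x, s) = (β p, c)` for some `s`, where
`equilibriumMap β ℓ (x, s) = ((s - log xᵢ - β ℓᵢ(xᵢ))ᵢ, ∑ xᵢ)`.

On positive `x` this map is `C²`, with derivative `(v, σ) ↦ ((σ - dᵢ vᵢ)ᵢ, ∑ vᵢ)`,
`dᵢ = 1 / xᵢ + β ℓᵢ'(xᵢ) > 0`. The derivative is injective: `vᵢ = σ / dᵢ` and `∑ vᵢ = 0` force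
`σ = 0`. The inverse function theorem then gives a `C¹` local inverse, and uniqueness of the
equilibrium identifies it with `p ↦ (x̄(p), s(p))` near each point.

Differentiating the equations along `pᵢ` gives `dⱼ vⱼ = σ - β δᵢⱼ` and `∑ vⱼ = 0`. If `vᵢ ≥ 0`, then
`σ ≥ β > 0`, so `vⱼ > 0` for all `j ≠ i`; as there are at least two links, this contradicts
`∑ vⱼ = 0`.
-/

/-- The map `(x, s) ↦ ((s - (log xᵢ + β ℓᵢ(xᵢ)))ᵢ, ∑ xᵢ)`, whose fibre over `(β p, c)` within
positive `x` encodes the equilibria for `p` with total load `c`. -/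
noncomputable def equilibriumMap {R : ℕ} (β : ℝ) (ℓ : Fin R → ℝ → ℝ)
    (z : (Fin R → ℝ) × ℝ) : (Fin R → ℝ) × ℝ :=
  (fun i => z.2 - (Real.log (z.1 i) + β * ℓ i (z.1 i)), ∑ i, z.1 i)

/-- The linear map `(v, σ) ↦ ((σ - dᵢ vᵢ)ᵢ, ∑ vᵢ)`, the shape of the derivative of
`equilibriumMap`. -/
noncomputable def equilibriumDeriv {R : ℕ} (d : Fin R → ℝ) :
    ((Fin R → ℝ) × ℝ) →L[ℝ] ((Fin R → ℝ) × ℝ) :=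
  (ContinuousLinearMap.pi fun i => ContinuousLinearMap.snd ℝ (Fin R → ℝ) ℝ -
    d i • ((ContinuousLinearMap.proj i).comp (ContinuousLinearMap.fst ℝ (Fin R → ℝ) ℝ))).prod
    (∑ i, (ContinuousLinearMap.proj i).comp (ContinuousLinearMap.fst ℝ (Fin R → ℝ) ℝ))

lemma equilibriumDeriv_apply {R : ℕ} (d : Fin R → ℝ) (z : (Fin R → ℝ) × ℝ) :
    equilibriumDeriv d z = (fun i => z.2 - d i * z.1 i, ∑ i, z.1 i) := by
  ext <;> simp [equilibriumDeriv]

lemma equilibriumDeriv_injective {R : ℕ} (hR : 2 ≤ R) (d : Fin R → ℝ) (hd : ∀ i, 0 < d i) :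
    Function.Injective (equilibriumDeriv d) := by
  rw [injective_iff_map_eq_zero]
  rintro ⟨v, σ⟩ hz
  rw [equilibriumDeriv_apply, Prod.mk_eq_zero] at hz
  obtain ⟨h1, h2⟩ := hz
  have hv : ∀ i, v i = σ * (d i)⁻¹ := by
    intro i
    have := congrFun h1 i
    simp only [Pi.zero_apply] at this
    rw [eq_mul_inv_iff_mul_eq₀ (hd i).ne']
    linarith
  have hs : 0 < ∑ i, (d i)⁻¹ :=
    Finset.sum_pos (fun i _ => inv_pos.2 (hd i)) ⟨⟨0, by omega⟩, Finset.mem_univ _⟩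
  simp only [hv, ← Finset.mul_sum] at h2
  have hσ : σ = 0 := (mul_eq_zero.1 h2).resolve_right hs.ne'
  refine Prod.ext (funext fun i => ?_) hσ
  simp [hv, hσ]

lemma contDiffAt_equilibriumMap {R : ℕ} (β : ℝ) (ℓ : Fin R → ℝ → ℝ)
    (hsmooth : ∀ i, ContDiff ℝ 2 (ℓ i)) (z : (Fin R → ℝ) × ℝ) (hz : ∀ i, 0 < z.1 i) :
    ContDiffAt ℝ 1 (equilibriumMap β ℓ) z := by
  have hc : ∀ i, ContDiffAt ℝ 1 (fun z : (Fin R → ℝ) × ℝ => z.1 i) z := fun i => by fun_prop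
  refine ContDiffAt.prodMk (contDiffAt_pi.2 fun i => ?_) (ContDiffAt.sum fun i _ => hc i)
  have hl : ContDiffAt ℝ 1 (ℓ i) (z.1 i) := ((hsmooth i).of_le (by norm_num)).contDiffAt
  exact contDiffAt_snd.sub (((hc i).log (hz i).ne').add
    (contDiffAt_const.mul (hl.comp z (hc i))))

lemma hasFDerivAt_equilibriumMap {R : ℕ} (β : ℝ) (ℓ ℓ' : Fin R → ℝ → ℝ)
    (hderiv : ∀ i x, HasDerivAt (ℓ i) (ℓ' i x) x)
    (z : (Fin R → ℝ) × ℝ) (hz : ∀ i, 0 < z.1 i) :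
    HasFDerivAt (equilibriumMap β ℓ)
      (equilibriumDeriv fun i => (z.1 i)⁻¹ + β * ℓ' i (z.1 i)) z := by
  have hc : ∀ i, HasFDerivAt (fun z : (Fin R → ℝ) × ℝ => z.1 i)
      ((ContinuousLinearMap.proj i).comp (ContinuousLinearMap.fst ℝ (Fin R → ℝ) ℝ)) z :=
    fun i => ContinuousLinearMap.hasFDerivAt
      ((ContinuousLinearMap.proj i).comp (ContinuousLinearMap.fst ℝ (Fin R → ℝ) ℝ))
  refine HasFDerivAt.prodMk (hasFDerivAt_pi.2 fun i => ?_) (HasFDerivAt.fun_sum fun i _ => hc i)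
  have hg := (Real.hasDerivAt_log (hz i).ne').add ((hderiv i (z.1 i)).const_mul β)
  have hgc := HasDerivAt.comp_hasFDerivAt (f := fun z : (Fin R → ℝ) × ℝ => z.1 i) z hg (hc i)
  exact hasFDerivAt_snd.sub hgc

/-- A positive fixed point of `h(·, p)` equalises `log xᵢ + β ℓᵢ(xᵢ) + β pᵢ` over the links. -/
lemma exists_equilibriumMap_eq {R : ℕ} (hR : 2 ≤ R) (β c : ℝ) (hc : 0 < c)
    (ℓ : Fin R → ℝ → ℝ) (x p : Fin R → ℝ)
    (hx : ∀ i, x i = c * Real.exp (-β * (ℓ i (x i) + p i)) /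
        ∑ j, Real.exp (-β * (ℓ j (x j) + p j))) (hsum : ∑ i, x i = c) :
    ∃ s, equilibriumMap β ℓ (x, s) = (fun i => β * p i, c) := by
  have hS : 0 < ∑ j, Real.exp (-β * (ℓ j (x j) + p j)) :=
    Finset.sum_pos (fun i _ => Real.exp_pos _) ⟨⟨0, by omega⟩, Finset.mem_univ _⟩
  refine ⟨Real.log (c / ∑ j, Real.exp (-β * (ℓ j (x j) + p j))),
    Prod.ext (funext fun i => ?_) hsum⟩
  have h1 : Real.log (x i) = Real.log (c / ∑ j, Real.exp (-β * (ℓ j (x j) + p j)))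
      + -β * (ℓ i (x i) + p i) := by
    conv_lhs => rw [hx i, mul_div_right_comm,
      Real.log_mul (div_pos hc hS).ne' (Real.exp_pos _).ne', Real.log_exp]
  simp only [equilibriumMap, h1]
  ring

/-- Converse of `exists_equilibriumMap_eq`. -/
lemma eq_of_equilibriumMap_eq {R : ℕ} (hR : 2 ≤ R) (β c s : ℝ)
    (ℓ : Fin R → ℝ → ℝ) (x p : Fin R → ℝ) (hx : ∀ i, 0 < x i)
    (he : equilibriumMap β ℓ (x, s) = (fun i => β * p i, c)) (i : Fin R) :
    x i = c * Real.exp (-β * (ℓ i (x i) + p i)) /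
        ∑ j, Real.exp (-β * (ℓ j (x j) + p j)) := by
  have hS : 0 < ∑ j, Real.exp (-β * (ℓ j (x j) + p j)) :=
    Finset.sum_pos (fun i _ => Real.exp_pos _) ⟨⟨0, by omega⟩, Finset.mem_univ _⟩
  have h1 : ∀ j, x j = Real.exp s * Real.exp (-β * (ℓ j (x j) + p j)) := by
    intro j
    have := congrFun (congrArg Prod.fst he) j
    simp only [equilibriumMap] at this
    have hlog : Real.log (x j) = s + -β * (ℓ j (x j) + p j) := by linarith
    rw [← Real.exp_add, ← hlog, Real.exp_log (hx j)]
  have h2 : c = Real.exp s * ∑ j, Real.exp (-β * (ℓ j (x j) + p j)) := by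
    have hsum : ∑ j, x j = c := congrArg Prod.snd he
    rw [Finset.mul_sum, ← hsum]
    exact Finset.sum_congr rfl fun j _ => h1 j
  rw [eq_div_iff hS.ne']
  nth_rewrite 1 [h1 i]
  rw [h2]
  ring

/-- The stochastic user equilibrium map `p ↦ x̄(p)` is continuously differentiable, and every
diagonal partial derivative `∂x̄ᵢ(p)/∂pᵢ` is negative. -/
theorem stmt_3
    (R : ℕ) (hR : 2 ≤ R)
    (β lam mu : ℝ) (hβ : 0 < β) (hlam : 0 < lam) (hmu : 0 < mu) (hmu1 : mu < 1)
    (ℓ ℓ' : Fin R → ℝ → ℝ)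
    (hsmooth : ∀ i, ContDiff ℝ 2 (ℓ i))
    (hderiv : ∀ i x, HasDerivAt (ℓ i) (ℓ' i x) x)
    (hpos : ∀ i x, 0 < ℓ' i x)
    (hconv : ∀ i, Monotone (ℓ' i))
    (h : (Fin R → ℝ) → (Fin R → ℝ) → Fin R → ℝ)
    (hdef : ∀ x p i, h x p i =
      (lam / mu) * Real.exp (-β * (ℓ i (x i) + p i)) /
        ∑ j, Real.exp (-β * (ℓ j (x j) + p j)))
    (xbar : (Fin R → ℝ) → Fin R → ℝ)
    (hfix : ∀ p, xbar p = h (xbar p) p)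
    (huniq : ∀ p x, x = h x p → x = xbar p)
    (hxpos : ∀ p i, 0 < xbar p i)
    (hxsum : ∀ p, ∑ i, xbar p i = lam / mu) :
    ContDiff ℝ 1 xbar ∧
    ∀ (p : Fin R → ℝ) (i : Fin R), fderiv ℝ xbar p (Pi.single i 1) i < 0 := by
  have hex : ∀ p, ∃ s, equilibriumMap β ℓ (xbar p, s) = (fun i => β * p i, lam / mu) := fun p =>
    exists_equilibriumMap_eq hR β _ (div_pos hlam hmu) ℓ _ p
      (fun i => (congrFun (hfix p) i).trans (hdef _ _ _)) (hxsum p)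
  choose s hs using hex
  have hd : ∀ p i, 0 < (xbar p i)⁻¹ + β * ℓ' i (xbar p i) := fun p i =>
    add_pos (inv_pos.2 (hxpos p i)) (mul_pos hβ (hpos _ _))
  have hC : ContDiff ℝ 1 xbar := by
    rw [contDiff_iff_contDiffAt]
    intro p
    have hcd := contDiffAt_equilibriumMap β ℓ hsmooth (xbar p, s p) (hxpos p)
    have hfd := hasFDerivAt_equilibriumMap β ℓ ℓ' hderiv (xbar p, s p) (hxpos p)
    let e := (LinearEquiv.ofInjectiveEndo _
      (equilibriumDeriv_injective hR _ (hd p))).toContinuousLinearEquiv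
    have hfd' : HasFDerivAt (equilibriumMap β ℓ)
        (e : ((Fin R → ℝ) × ℝ) →L[ℝ] ((Fin R → ℝ) × ℝ)) (xbar p, s p) := hfd
    have hst := hcd.hasStrictFDerivAt' hfd' one_ne_zero
    have hinv := hcd.to_localInverse hfd' one_ne_zero
    rw [hs p] at hinv
    have hr := hst.eventually_right_inverse
    have ht := hst.localInverse_tendsto
    rw [hs p] at hr ht
    have hq : ContDiff ℝ 1 (fun q : Fin R → ℝ => ((fun i => β * q i, lam / mu) :
        (Fin R → ℝ) × ℝ)) := by fun_prop
    have hqt := hq.continuous.tendsto p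
    -- positivity is an open condition, so the local inverse stays in the region of positive loads
    have hopen : ∀ᶠ z : (Fin R → ℝ) × ℝ in nhds (xbar p, s p), ∀ i, 0 < z.1 i := by
      refine Filter.eventually_all.2 fun i => ?_
      have : Continuous fun z : (Fin R → ℝ) × ℝ => z.1 i := by fun_prop
      exact this.continuousAt.eventually (lt_mem_nhds (hxpos p i))
    refine (contDiffAt_fst.comp p (hinv.comp p hq.contDiffAt)).congr_of_eventuallyEq ?_
    filter_upwards [hqt.eventually hr, hqt.eventually (ht.eventually hopen)] with q h1 h2
    symm
    refine huniq q _ (funext fun i => ?_)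
    rw [hdef]
    exact eq_of_equilibriumMap_eq hR β _ _ ℓ _ q h2 h1 i
  refine ⟨hC, fun p i => ?_⟩
  have hx : HasFDerivAt xbar (fderiv ℝ xbar p) p :=
    (hC.differentiable one_ne_zero p).hasFDerivAt
  have hxi : ∀ j, HasFDerivAt (fun q => xbar q j)
      ((ContinuousLinearMap.proj j).comp (fderiv ℝ xbar p)) p := hasFDerivAt_pi'.1 hx
  set v := fderiv ℝ xbar p (Pi.single i 1) with hv
  have hsum : ∑ j, v j = 0 := by
    have h1 := HasFDerivAt.fun_sum (u := Finset.univ) fun j _ => hxi j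
    simp only [hxsum] at h1
    have := congrArg (fun L => L (Pi.single i 1)) (h1.unique (hasFDerivAt_const _ _))
    simpa using this
  have hG : ∀ j, HasFDerivAt
      (fun q : Fin R → ℝ => (Real.log (xbar q j) + β * ℓ j (xbar q j)) + β * q j)
      (((xbar p j)⁻¹ + β * ℓ' j (xbar p j)) •
        ((ContinuousLinearMap.proj j).comp (fderiv ℝ xbar p)) +
        β • ContinuousLinearMap.proj j) p := by
    intro j
    have hg := (Real.hasDerivAt_log (hxpos p j).ne').add ((hderiv j (xbar p j)).const_mul β)
    exact (hg.comp_hasFDerivAt p (hxi j)).add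
      ((ContinuousLinearMap.proj (R := ℝ) (φ := fun _ : Fin R => ℝ) j).hasFDerivAt.const_mul β)
  -- all these functions equal `s`, so their derivatives coincide
  have hGs : ∀ j, (fun q : Fin R → ℝ =>
      (Real.log (xbar q j) + β * ℓ j (xbar q j)) + β * q j) = s := by
    intro j
    funext q
    have := congrFun (congrArg Prod.fst (hs q)) j
    simp only [equilibriumMap] at this
    linarith
  have hkey : ∀ j, j ≠ i → ((xbar p j)⁻¹ + β * ℓ' j (xbar p j)) * v j =
      ((xbar p i)⁻¹ + β * ℓ' i (xbar p i)) * v i + β := by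
    intro j hj
    have h1 := hG j
    have h2 := hG i
    rw [hGs] at h1 h2
    have := congrArg (fun L => L (Pi.single i 1)) (h1.unique h2)
    simpa [hj, ← hv] using this
  by_contra! hvi
  have hvj : ∀ j, j ≠ i → 0 < v j := fun j hj => by
    refine pos_of_mul_pos_right (a := (xbar p j)⁻¹ + β * ℓ' j (xbar p j)) ?_ (hd p j).le
    rw [hkey j hj]
    exact add_pos_of_nonneg_of_pos (mul_nonneg (hd p i).le hvi) hβ
  have : Nontrivial (Fin R) := Fin.nontrivial_iff_two_le.2 hR
  obtain ⟨j, hj⟩ := exists_ne i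
  refine hsum.not_gt (Finset.sum_pos' (fun k _ => ?_) ⟨j, Finset.mem_univ _, hvj j hj⟩)
  by_cases hk : k = i
  · exact hk ▸ hvi
  · exact (hvj k hk).le
end

section
/- Existence of the equilibrium toll: there exists a toll vector p̄ ∈ ℝ^R satisfying, for every link i, p̄_i = x̄_i(p̄) · ℓ_i'(x̄_i(p̄)), i.e. each toll equals the marginal latency cost at the stochastic user equilibrium it induces. -/
/-!
Write `S = lam / mu` and `aᵢ(x) = β (ℓᵢ(x) + x ℓᵢ'(x))`. A vector `x` together with the toll
`pᵢ = xᵢ ℓᵢ'(xᵢ)` is an equilibrium as soon as all the numbers `xᵢ exp(aᵢ(xᵢ))` take a common value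
`c > 0` and `∑ xᵢ = S`: then `exp(-aᵢ(xᵢ)) = xᵢ / c`, so the logit weights are proportional to `x`.
Uniqueness of the equilibrium then gives `x = x̄(p)`, which is the claim; no fixed-point theorem for
`p ↦ x̄(p)` is needed.

Since `ℓᵢ` and `ℓᵢ'` are nondecreasing and `ℓᵢ' > 0`, the map `x ↦ x exp(aᵢ(x))` is strictly
increasing on `[0, ∞)`, vanishes at `0` and is unbounded. Its inverse `φᵢ` is therefore continuous
and nondecreasing (`exists_inverse_mul`), and the intermediate value theorem applied to
`c ↦ ∑ φᵢ(c)`, which is `0` at `c = 0` and at least `S` for large `c`, provides the required `c`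
(`exists_common_level`).
-/

open Real

/-- The map `x ↦ x * E x` on `[0, ∞)`, with `E` positive, continuous and nondecreasing there, is a
bijection of `[0, ∞)`; its inverse is the restriction of a continuous monotone `φ : ℝ → ℝ`. -/
lemma exists_inverse_mul (E : ℝ → ℝ) (hE : Continuous E) (hEpos : ∀ x, 0 < E x)
    (hmono : MonotoneOn E (Set.Ici 0)) :
    ∃ φ : ℝ → ℝ, Continuous φ ∧ Monotone φ ∧ φ 0 = 0 ∧ (∀ c, 0 ≤ c → φ c * E (φ c) = c) ∧
      ∀ s, 0 ≤ s → φ (s * E s) = s := by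
  -- Freezing `E` at `E 0` on the negative axis yields a homeomorphism of the whole line.
  set F : ℝ → ℝ := fun x => x * E (max x 0) with hF
  have hFc : Continuous F := by fun_prop
  have hFm : StrictMono F := by
    intro x y hxy
    simp only [hF]
    rcases le_or_gt y 0 with hy | hy
    · rw [max_eq_right hy, max_eq_right (hxy.le.trans hy)]
      exact mul_lt_mul_of_pos_right hxy (hEpos 0)
    · rcases le_or_gt x 0 with hx | hx
      · exact (mul_nonpos_of_nonpos_of_nonneg hx (hEpos _).le).trans_lt (mul_pos hy (hEpos _))
      · rw [max_eq_left hy.le, max_eq_left hx.le]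
        exact mul_lt_mul hxy (hmono hx.le hy.le hxy.le) (hEpos _) hy.le
  have htop : Filter.Tendsto F Filter.atTop Filter.atTop := by
    refine Filter.tendsto_atTop_mono' _ ?_
      (Filter.tendsto_id.atTop_mul_const (hEpos 0))
    filter_upwards [Filter.eventually_ge_atTop 0] with x hx
    simp only [hF, id, max_eq_left hx]
    exact mul_le_mul_of_nonneg_left (hmono (Set.mem_Ici.2 le_rfl) hx hx) hx
  have hbot : Filter.Tendsto F Filter.atBot Filter.atBot := by
    refine (Filter.tendsto_id.atBot_mul_const (hEpos 0)).congr' ?_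
    filter_upwards [Filter.eventually_le_atBot 0] with x hx
    simp only [hF, id, max_eq_right hx]
  let e : ℝ ≃o ℝ := hFm.orderIsoOfSurjective F (hFc.surjective htop hbot)
  have he : ∀ x, e x = F x := fun x => rfl
  have h0 : e.symm 0 = 0 := by
    rw [OrderIso.symm_apply_eq, he]
    simp [hF]
  refine ⟨e.symm, e.symm.continuous, e.symm.monotone, h0, fun c hc => ?_, fun s hs => ?_⟩
  · have h1 : 0 ≤ e.symm c := h0 ▸ e.symm.monotone hc
    have h2 := e.apply_symm_apply c
    rw [he] at h2
    simpa only [hF, max_eq_left h1] using h2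
  · rw [OrderIso.symm_apply_eq, he]
    simp only [hF, max_eq_left hs]

/-- A mass `S > 0` can be split as `∑ xᵢ = S` with `xᵢ ≥ 0` so that all `xᵢ * Eᵢ xᵢ` equal one positive number. -/
lemma exists_common_level {R : ℕ} (hR : 1 ≤ R) {S : ℝ} (hS : 0 < S) (E : Fin R → ℝ → ℝ)
    (hE : ∀ i, Continuous (E i)) (hEpos : ∀ i x, 0 < E i x)
    (hmono : ∀ i, MonotoneOn (E i) (Set.Ici 0)) :
    ∃ (x : Fin R → ℝ) (c : ℝ), 0 < c ∧ ∑ i, x i = S ∧ (∀ i, 0 ≤ x i) ∧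
      ∀ i, x i * E i (x i) = c := by
  choose φ hφc hφm hφ0 hφ hφs using fun i => exists_inverse_mul (E i) (hE i) (hEpos i) (hmono i)
  have hnn : ∀ i c, 0 ≤ c → 0 ≤ φ i c := fun i c hc => hφ0 i ▸ hφm i hc
  let k : Fin R := ⟨0, hR⟩
  -- At this level the link `k` alone already carries the whole mass `S`.
  have hC : 0 ≤ S * E k S := (mul_pos hS (hEpos k S)).le
  have hG : ContinuousOn (fun c => ∑ i, φ i c) (Set.Icc 0 (S * E k S)) :=
    (continuous_finsetSum _ fun i _ => hφc i).continuousOn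
  have hle : S ≤ ∑ i, φ i (S * E k S) := by
    have := Finset.single_le_sum (f := fun i => φ i (S * E k S))
      (fun i _ => hnn i _ hC) (Finset.mem_univ k)
    simpa only [hφs k S hS.le] using this
  obtain ⟨c, hc, hcS⟩ := intermediate_value_Icc hC hG
    (show S ∈ Set.Icc _ _ from ⟨by simpa [hφ0] using hS.le, hle⟩)
  refine ⟨fun i => φ i c, c, lt_of_le_of_ne hc.1 ?_, hcS, fun i => hnn i c hc.1,
    fun i => hφ i c hc.1⟩
  rintro rfl
  simp only [hφ0, Finset.sum_const_zero] at hcS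
  exact hS.ne hcS

/-- Existence of the equilibrium toll: there exists `p̄` with
`p̄ᵢ = x̄ᵢ(p̄) · ℓᵢ'(x̄ᵢ(p̄))` for every link `i`. -/
theorem stmt_4
    (R : ℕ) (hR : 1 ≤ R)
    (β lam mu : ℝ) (hβ : 0 < β) (hlam : 0 < lam) (hmu : 0 < mu) (hmu1 : mu < 1)
    (ℓ ℓ' : Fin R → ℝ → ℝ)
    (hderiv : ∀ i x, HasDerivAt (ℓ i) (ℓ' i x) x)
    (hcont : ∀ i, Continuous (ℓ' i))
    (hpos : ∀ i x, 0 < ℓ' i x)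
    (hconv : ∀ i, Monotone (ℓ' i))
    (h : (Fin R → ℝ) → (Fin R → ℝ) → Fin R → ℝ)
    (hdef : ∀ x p i, h x p i =
      (lam / mu) * Real.exp (-β * (ℓ i (x i) + p i)) /
        ∑ j, Real.exp (-β * (ℓ j (x j) + p j)))
    (xbar : (Fin R → ℝ) → Fin R → ℝ)
    (hfix : ∀ p, xbar p = h (xbar p) p)
    (huniq : ∀ p x, x = h x p → x = xbar p)
    (hxcont : Continuous xbar)
    (hxpos : ∀ p i, 0 < xbar p i)
    (hxsum : ∀ p, ∑ i, xbar p i = lam / mu) :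
    ∃ pbar : Fin R → ℝ, ∀ i, pbar i = xbar pbar i * ℓ' i (xbar pbar i) := by
  have hℓc : ∀ i, Continuous (ℓ i) := fun i =>
    continuous_iff_continuousAt.2 fun x => (hderiv i x).continuousAt
  have hℓm : ∀ i, StrictMono (ℓ i) := fun i =>
    strictMono_of_hasDerivAt_pos (hderiv i) (hpos i)
  have hS : 0 < lam / mu := div_pos hlam hmu
  obtain ⟨x, c, hc, hsum, -, hx⟩ := exists_common_level hR hS
    (fun i t => Real.exp (β * (ℓ i t + t * ℓ' i t)))
    (fun i => by have := hℓc i; have := hcont i; fun_prop)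
    (fun i t => Real.exp_pos _)
    (fun i s hs t ht hst => by
      have h1 := (hℓm i).monotone hst
      have h2 := mul_le_mul hst (hconv i hst) (hpos i s).le ht
      exact Real.exp_le_exp.2 (mul_le_mul_of_nonneg_left (add_le_add h1 h2) hβ.le))
  have hw : ∀ i, Real.exp (-β * (ℓ i (x i) + x i * ℓ' i (x i))) = x i / c := fun i => by
    rw [neg_mul, Real.exp_neg, eq_div_iff hc.ne', ← hx i, mul_comm, mul_assoc,
      mul_inv_cancel₀ (Real.exp_pos _).ne', mul_one]
  have hxe : x = xbar (fun i => x i * ℓ' i (x i)) := by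
    refine huniq _ _ (funext fun i => ?_)
    rw [hdef]
    simp only [hw]
    rw [← Finset.sum_div, hsum]
    field_simp
  refine ⟨fun i => x i * ℓ' i (x i), fun i => ?_⟩
  rw [← hxe]
end

section
/- Uniqueness of the equilibrium toll: there is at most one toll vector p̄ ∈ ℝ^R satisfying p̄_i = x̄_i(p̄) · ℓ_i'(x̄_i(p̄)) for every link i. Concretely, if p and p' both satisfy this fixed-point equation and the SUE map is strictly monotone in the sense that ⟨x̄(q) − x̄(q'), q − q'⟩ < 0 whenever x̄(q) ≠ x̄(q'), then p = p'. -/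
open Real

/-- Uniqueness of the equilibrium toll: if `p` and `p'` both satisfy the marginal-cost
fixed-point equation and the SUE map is strictly monotone, then `p = p'`. -/
theorem stmt_5
    (R : ℕ) (hR : 1 ≤ R)
    (β lam mu : ℝ) (hβ : 0 < β) (hlam : 0 < lam) (hmu : 0 < mu) (hmu1 : mu < 1)
    (ℓ ℓ' : Fin R → ℝ → ℝ)
    (hderiv : ∀ i x, HasDerivAt (ℓ i) (ℓ' i x) x)
    (hcont : ∀ i, Continuous (ℓ' i))
    (hpos : ∀ i x, 0 < ℓ' i x)
    (hconv : ∀ i, Monotone (ℓ' i))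
    (h : (Fin R → ℝ) → (Fin R → ℝ) → Fin R → ℝ)
    (hdef : ∀ x p i, h x p i =
      (lam / mu) * Real.exp (-β * (ℓ i (x i) + p i)) /
        ∑ j, Real.exp (-β * (ℓ j (x j) + p j)))
    (xbar : (Fin R → ℝ) → Fin R → ℝ)
    (hfix : ∀ p, xbar p = h (xbar p) p)
    (huniq : ∀ p x, x = h x p → x = xbar p)
    (hxpos : ∀ p i, 0 < xbar p i)
    (hxsum : ∀ p, ∑ i, xbar p i = lam / mu)
    (hmono : ∀ q q' : Fin R → ℝ, xbar q ≠ xbar q' →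
      ∑ i, (xbar q i - xbar q' i) * (q i - q' i) < 0) :
    ∀ p p' : Fin R → ℝ,
      (∀ i, p i = xbar p i * ℓ' i (xbar p i)) →
      (∀ i, p' i = xbar p' i * ℓ' i (xbar p' i)) →
      p = p' := by
  intro p p' hp hp'
  by_cases hx : xbar p = xbar p'
  · funext i
    rw [hp i, hp' i, hx]
  -- The marginal cost `x * ℓ' x` is nondecreasing in `x > 0`, so each term of the sum in
  -- `hmono` is nonnegative at two fixed points.
  · refine absurd (hmono p p' hx) (not_lt.mpr (Finset.sum_nonneg fun i _ => ?_))
    rw [hp i, hp' i]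
    rcases le_total (xbar p i) (xbar p' i) with hle | hle
    · exact mul_nonneg_of_nonpos_of_nonpos (sub_nonpos.mpr hle)
        (sub_nonpos.mpr (mul_le_mul hle (hconv i hle) (hpos i _).le (hxpos p' i).le))
    · exact mul_nonneg (sub_nonneg.mpr hle)
        (sub_nonneg.mpr (mul_le_mul hle (hconv i hle) (hpos i _).le (hxpos p i).le))
end

section
/- Optimality of the equilibrium toll: if p̄ ∈ ℝ^R satisfies p̄_i = x̄_i(p̄) · ℓ_i'(x̄_i(p̄)) for every link i, then the induced stochastic user equilibrium x̄(p̄) is the perturbed socially optimal load, i.e. x̄(p̄) minimizes Σ_{i=1}^R y_i ℓ_i(y_i) + (1/β) Σ_{i=1}^R y_i ln(y_i) over the feasible set Δ. -/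
open Real

/-!
The social cost is separable with convex summands, so its minimizer over the simplex `Δ` is
characterized by equal marginal costs. Each summand lies above its tangent line at the equilibrium
`x = xbar pbar` (`mul_tangent_le` for the latency part, `entropy_tangent_le` for the entropy part).
With the toll `pbar i = x i * ℓ' i (x i)`, the slope of the `i`-th tangent is
`ℓ i (x i) + pbar i + (log (x i) + 1) / β`, and taking logarithms in the logit fixed-point equation
shows that this does not depend on `i`. Since all points of `Δ` have the same coordinate sum, the
linear terms cancel after summation, leaving `S x ≤ S y`.
-/

/-- If `f` is convex (it has a monotone derivative) and `f'` is nonnegative at `x`, then `t * f t`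
lies above its tangent at `x` on the half-line `t ≥ 0`. -/
lemma mul_tangent_le {f f' : ℝ → ℝ} (hd : ∀ x, HasDerivAt f (f' x) x) (hm : Monotone f')
    {x y : ℝ} (hx : 0 ≤ f' x) (hy : 0 ≤ y) :
    x * f x + (f x + x * f' x) * (y - x) ≤ y * f y := by
  have hderiv : deriv f = f' := funext fun z => (hd z).deriv
  have hconv : ConvexOn ℝ Set.univ f :=
    Monotone.convexOn_univ_of_deriv (fun z => (hd z).differentiableAt) (hderiv ▸ hm)
  have htan : f x + f' x * (y - x) ≤ f y := by
    rcases lt_trichotomy x y with hxy | rfl | hxy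
    · have := hconv.le_slope_of_hasDerivAt (Set.mem_univ x) (Set.mem_univ y) hxy (hd x)
      rw [slope_def_field, le_div_iff₀ (by linarith)] at this
      linarith
    · simp
    · have := hconv.slope_le_of_hasDerivAt (Set.mem_univ y) (Set.mem_univ x) hxy (hd x)
      rw [slope_def_field, div_le_iff₀ (by linarith)] at this
      linarith
  nlinarith [mul_le_mul_of_nonneg_left htan hy, mul_nonneg hx (sq_nonneg (y - x))]

/-- `t * log t` lies above its tangent at any `x > 0`, including at the endpoint `t = 0`. -/
lemma entropy_tangent_le {x y : ℝ} (hx : 0 < x) (hy : 0 ≤ y) :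
    x * Real.log x + (Real.log x + 1) * (y - x) ≤ y * Real.log y := by
  rcases hy.eq_or_lt with rfl | hy
  · simp; nlinarith
  · have h1 := Real.log_le_sub_one_of_pos (div_pos hx hy)
    rw [Real.log_div hx.ne' hy.ne'] at h1
    have h2 := mul_le_mul_of_nonneg_left h1 hy.le
    have h3 : y * (x / y - 1) = x - y := by field_simp
    linarith

/-- Optimality of the equilibrium toll: if `p̄` equals the marginal latency cost at the SUE it
induces, then `x̄(p̄)` minimizes the entropy-regularized social cost over `Δ`. -/
theorem stmt_6
    (R : ℕ) (hR : 1 ≤ R)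
    (β lam mu : ℝ) (hβ : 0 < β) (hlam : 0 < lam) (hmu : 0 < mu) (hmu1 : mu < 1)
    (ℓ ℓ' : Fin R → ℝ → ℝ)
    (hderiv : ∀ i x, HasDerivAt (ℓ i) (ℓ' i x) x)
    (hcont : ∀ i, Continuous (ℓ' i))
    (hpos : ∀ i x, 0 < ℓ' i x)
    (hconv : ∀ i, Monotone (ℓ' i))
    (h : (Fin R → ℝ) → (Fin R → ℝ) → Fin R → ℝ)
    (hdef : ∀ x p i, h x p i =
      (lam / mu) * Real.exp (-β * (ℓ i (x i) + p i)) /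
        ∑ j, Real.exp (-β * (ℓ j (x j) + p j)))
    (xbar : (Fin R → ℝ) → Fin R → ℝ)
    (hfix : ∀ p, xbar p = h (xbar p) p)
    (huniq : ∀ p x, x = h x p → x = xbar p)
    (hxpos : ∀ p i, 0 < xbar p i)
    (hxsum : ∀ p, ∑ i, xbar p i = lam / mu)
    (Δ : Set (Fin R → ℝ))
    (hΔ : Δ = {y | (∀ i, 0 ≤ y i) ∧ ∑ i, y i = lam / mu})
    (S : (Fin R → ℝ) → ℝ)
    (hS : ∀ y, S y = (∑ i, y i * ℓ i (y i)) + (1 / β) * ∑ i, y i * Real.log (y i)) :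
    ∀ pbar : Fin R → ℝ,
      (∀ i, pbar i = xbar pbar i * ℓ' i (xbar pbar i)) →
      IsMinOn S Δ (xbar pbar) := by
  intro pbar hp
  rw [isMinOn_iff]
  intro y hy
  rw [hΔ] at hy
  obtain ⟨hy0, hysum⟩ := hy
  have hxsum' := hxsum pbar
  have hxpos' := hxpos pbar
  have hfix' := fun i => (congrFun (hfix pbar) i).trans (hdef (xbar pbar) pbar i)
  generalize xbar pbar = x at *
  set Z := ∑ j, Real.exp (-β * (ℓ j (x j) + pbar j)) with hZ
  have hZpos : 0 < Z :=
    Finset.sum_pos (fun _ _ => Real.exp_pos _) ⟨⟨0, hR⟩, Finset.mem_univ _⟩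
  have hload : 0 < lam / mu := div_pos hlam hmu
  -- the logit equation makes the perturbed marginal cost the same on all links
  have hmarg : ∀ i, ℓ i (x i) + x i * ℓ' i (x i) + (1 / β) * (Real.log (x i) + 1)
      = (1 / β) * (Real.log (lam / mu) - Real.log Z + 1) := by
    intro i
    have hlog : Real.log (x i)
        = Real.log (lam / mu) + -β * (ℓ i (x i) + pbar i) - Real.log Z := by
      conv_lhs => rw [hfix' i]
      rw [Real.log_div (mul_pos hload (Real.exp_pos _)).ne' hZpos.ne',
        Real.log_mul hload.ne' (Real.exp_pos _).ne', Real.log_exp]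
    rw [hlog, ← hp i]
    field_simp
    ring
  set c := (1 / β) * (Real.log (lam / mu) - Real.log Z + 1)
  have hterm : ∀ i, x i * ℓ i (x i) + (1 / β) * (x i * Real.log (x i)) + c * (y i - x i)
      ≤ y i * ℓ i (y i) + (1 / β) * (y i * Real.log (y i)) := by
    intro i
    have h1 := mul_tangent_le (hderiv i) (hconv i) (hpos i (x i)).le (hy0 i)
    have h2 := mul_le_mul_of_nonneg_left (entropy_tangent_le (hxpos' i) (hy0 i))
      (one_div_pos.2 hβ).le
    rw [← hmarg i]
    linarith
  have hsum := Finset.sum_le_sum fun i (_ : i ∈ Finset.univ) => hterm i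
  simp only [Finset.sum_add_distrib, ← Finset.mul_sum, Finset.sum_sub_distrib, hysum, hxsum',
    sub_self, mul_zero, add_zero] at hsum
  rw [hS, hS]
  exact hsum
end

section
/- Main fixed-point theorem: there exists a unique pair (x̄, p̄) ∈ ℝ^R × ℝ^R such that x̄ = h(x̄, p̄) (x̄ is a stochastic user equilibrium for the tolls p̄) and p̄_i = x̄_i · ℓ_i'(x̄_i) for every link i; moreover, this x̄ minimizes the entropy-regularized social cost Σ_{i=1}^R y_i ℓ_i(y_i) + (1/β) Σ_{i=1}^R y_i ln(y_i) over the feasible set Δ. -/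
/-!
Write `cᵢ(x) = ℓᵢ(x) + x ℓᵢ'(x)` for the marginal cost of link `i`, and `M = lam / mu`. A pair
`(x, p)` with `pᵢ = xᵢ ℓᵢ'(xᵢ)` is a fixed point exactly when all `xᵢ` are positive, they sum to
`M`, and `log xᵢ + β cᵢ(xᵢ)` has a common value `t` (`exists_level`, `logit_of_level`).

In the variable `u = log x` the map `u ↦ u + β cᵢ(exp u)` is an increasing homeomorphism of `ℝ`
(`levelMap_strictMono`, `levelMap_surjective`), so each `t` determines a flow `exp (uᵢ(t))` that is
continuous and strictly increasing in `t`. The total flow takes a value `≤ M` and a value `≥ M`, so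
the intermediate value theorem gives existence; monotonicity in `t` gives uniqueness.

For the optimality, each summand of the regularized cost lies above its tangent line at `xᵢ > 0`,
whose slope is `cᵢ(xᵢ) + (log xᵢ + 1) / β = (t + 1) / β`, the same for every link. On the feasible
set `∑ (yᵢ - xᵢ) = 0`, so the tangent terms cancel.
-/

open Real

/-- The level `log x + β (ℓ x + x ℓ' x)` of a link carrying flow `x`, as a function of
`u = log x`, which ranges over all of `ℝ`. -/
noncomputable def levelMap (β : ℝ) (f f' : ℝ → ℝ) (u : ℝ) : ℝ :=
  u + β * (f (exp u) + exp u * f' (exp u))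

section Link

variable {β : ℝ} {f f' : ℝ → ℝ}

lemma marginal_mono (hderiv : ∀ x, HasDerivAt f (f' x) x) (hpos : ∀ x, 0 < f' x)
    (hconv : Monotone f') {x y : ℝ} (hx : 0 ≤ x) (hxy : x ≤ y) :
    f x + x * f' x ≤ f y + y * f' y := by
  have hf : StrictMono f := strictMono_of_hasDerivAt_pos hderiv hpos
  have h1 := hf.monotone hxy
  have h2 : x * f' x ≤ y * f' y :=
    mul_le_mul hxy (hconv hxy) (hpos x).le (hx.trans hxy)
  linarith

lemma levelMap_strictMono (hβ : 0 < β) (hderiv : ∀ x, HasDerivAt f (f' x) x)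
    (hpos : ∀ x, 0 < f' x) (hconv : Monotone f') : StrictMono (levelMap β f f') := by
  intro u v huv
  have h1 := marginal_mono hderiv hpos hconv (exp_pos u).le (exp_le_exp.2 huv.le)
  have h2 := mul_le_mul_of_nonneg_left h1 hβ.le
  unfold levelMap
  linarith

lemma levelMap_continuous (hderiv : ∀ x, HasDerivAt f (f' x) x) (hcont : Continuous f') :
    Continuous (levelMap β f f') := by
  have hf : Continuous f := continuous_iff_continuousAt.2 fun x => (hderiv x).continuousAt
  unfold levelMap
  fun_prop

lemma levelMap_surjective (hβ : 0 < β) (hderiv : ∀ x, HasDerivAt f (f' x) x)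
    (hcont : Continuous f') (hpos : ∀ x, 0 < f' x) (hconv : Monotone f') :
    Function.Surjective (levelMap β f f') := by
  -- By monotonicity of the marginal cost, `levelMap` dominates `u + C` on the right half-line
  -- and is dominated by it on the left, where `C` is `β` times the marginal cost at `1`.
  set C := β * (f 1 + 1 * f' 1) with hC
  refine (levelMap_continuous hderiv hcont).surjective ?_ ?_
  · refine Filter.tendsto_atTop_mono' _ ?_ (Filter.tendsto_atTop_add_const_right _ C Filter.tendsto_id)
    filter_upwards [Filter.eventually_ge_atTop 0] with u hu
    have h1 := mul_le_mul_of_nonneg_left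
      (marginal_mono hderiv hpos hconv zero_le_one (one_le_exp hu)) hβ.le
    simp only [levelMap, id]
    linarith
  · refine Filter.tendsto_atBot_mono' _ ?_ (Filter.tendsto_atBot_add_const_right _ C Filter.tendsto_id)
    filter_upwards [Filter.eventually_le_atBot 0] with u hu
    have h1 := mul_le_mul_of_nonneg_left
      (marginal_mono hderiv hpos hconv (exp_pos u).le (exp_le_one_iff.2 hu)) hβ.le
    simp only [levelMap, id]
    linarith

lemma tangent_le (hderiv : ∀ x, HasDerivAt f (f' x) x) (hconv : Monotone f') (x y : ℝ) :
    f' x * (y - x) ≤ f y - f x := by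
  have hc : Continuous f := continuous_iff_continuousAt.2 fun x => (hderiv x).continuousAt
  rcases lt_trichotomy x y with hxy | rfl | hxy
  · obtain ⟨c, hc, he⟩ :=
      exists_hasDerivAt_eq_slope f f' hxy hc.continuousOn fun z _ => hderiv z
    have h0 : 0 < y - x := sub_pos.2 hxy
    rw [eq_div_iff h0.ne'] at he
    nlinarith [hconv hc.1.le]
  · simp
  · obtain ⟨c, hc, he⟩ :=
      exists_hasDerivAt_eq_slope f f' hxy hc.continuousOn fun z _ => hderiv z
    have h0 : 0 < x - y := sub_pos.2 hxy
    rw [eq_div_iff h0.ne'] at he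
    nlinarith [hconv hc.2.le]

lemma mul_log_tangent_le {x y : ℝ} (hx : 0 < x) (hy : 0 ≤ y) :
    x * log x + (y - x) * (log x + 1) ≤ y * log y := by
  rcases hy.eq_or_lt with rfl | hy
  · simp only [zero_mul]
    nlinarith
  · have h1 := log_le_sub_one_of_pos (div_pos hx hy)
    rw [log_div hx.ne' hy.ne'] at h1
    have h2 := mul_le_mul_of_nonneg_left h1 hy.le
    have h3 : y * (x / y - 1) = x - y := by field_simp
    nlinarith

/-- The regularized cost of one link lies above its tangent line at any positive flow. -/
lemma cost_tangent_le (hβ : 0 < β) (hderiv : ∀ x, HasDerivAt f (f' x) x)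
    (hpos : ∀ x, 0 < f' x) (hconv : Monotone f') {x y : ℝ} (hx : 0 < x) (hy : 0 ≤ y) :
    x * f x + 1 / β * (x * log x) + (y - x) * ((log x + β * (f x + x * f' x) + 1) / β)
      ≤ y * f y + 1 / β * (y * log y) := by
  have h1 := mul_le_mul_of_nonneg_left (tangent_le hderiv hconv x y) hy
  have h2 := mul_le_mul_of_nonneg_left (mul_log_tangent_le hx hy) (one_div_pos.2 hβ).le
  have h3 : 0 ≤ f' x * (y - x) ^ 2 := mul_nonneg (hpos x).le (sq_nonneg _)
  have h4 : (log x + β * (f x + x * f' x) + 1) / β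
      = 1 / β * (log x + 1) + (f x + x * f' x) := by field_simp; ring
  rw [h4]
  nlinarith

end Link

/-- A logit split of a positive total `M` is positive, sums to `M`, and makes `log xᵢ + β aᵢ`
independent of `i`. -/
lemma exists_level {R : ℕ} (hR : 1 ≤ R) {β M : ℝ} (hM : 0 < M) {x a : Fin R → ℝ}
    (hx : ∀ i, x i = M * exp (-β * a i) / ∑ j, exp (-β * a j)) :
    (∀ i, 0 < x i) ∧ ∑ i, x i = M ∧ ∃ t, ∀ i, log (x i) + β * a i = t := by
  have : Nonempty (Fin R) := ⟨⟨0, hR⟩⟩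
  have hZ : 0 < ∑ j, exp (-β * a j) :=
    Finset.sum_pos (fun j _ => exp_pos _) Finset.univ_nonempty
  refine ⟨fun i => ?_, ?_, log M - log (∑ j, exp (-β * a j)), fun i => ?_⟩
  · rw [hx]; positivity
  · simp_rw [hx]
    rw [← Finset.sum_div, ← Finset.mul_sum, mul_div_assoc, div_self hZ.ne', mul_one]
  · rw [hx, log_div (by positivity) hZ.ne', log_mul hM.ne' (exp_pos _).ne', log_exp]
    ring

/-- Converse of `exists_level`: the common level is the logarithm of the normalizing constant. -/
lemma logit_of_level {R : ℕ} {β M t : ℝ} (hM : 0 < M) {x a : Fin R → ℝ}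
    (hx : ∀ i, 0 < x i) (hsum : ∑ i, x i = M) (ht : ∀ i, log (x i) + β * a i = t) (i : Fin R) :
    x i = M * exp (-β * a i) / ∑ j, exp (-β * a j) := by
  have key : ∀ j, exp (-β * a j) = x j * exp (-t) := fun j => by
    rw [← ht j, show -β * a j = log (x j) + -(log (x j) + β * a j) by ring, exp_add,
      exp_log (hx j)]
  simp_rw [key]
  rw [← Finset.sum_mul, hsum]
  have := exp_pos (-t)
  field_simp

/-- Main fixed-point theorem: there is a unique pair `(x̄, p̄)` with `x̄ = h(x̄, p̄)` and
`p̄ᵢ = x̄ᵢ ℓᵢ'(x̄ᵢ)`; moreover any such `x̄` minimizes the entropy-regularized social cost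
over `Δ`. -/
theorem stmt_7
    (R : ℕ) (hR : 1 ≤ R)
    (β lam mu : ℝ) (hβ : 0 < β) (hlam : 0 < lam) (hmu : 0 < mu) (hmu1 : mu < 1)
    (ℓ ℓ' : Fin R → ℝ → ℝ)
    (hderiv : ∀ i x, HasDerivAt (ℓ i) (ℓ' i x) x)
    (hcont : ∀ i, Continuous (ℓ' i))
    (hpos : ∀ i x, 0 < ℓ' i x)
    (hconv : ∀ i, Monotone (ℓ' i))
    (h : (Fin R → ℝ) → (Fin R → ℝ) → Fin R → ℝ)
    (hdef : ∀ x p i, h x p i =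
      (lam / mu) * Real.exp (-β * (ℓ i (x i) + p i)) /
        ∑ j, Real.exp (-β * (ℓ j (x j) + p j)))
    (Δ : Set (Fin R → ℝ))
    (hΔ : Δ = {y | (∀ i, 0 ≤ y i) ∧ ∑ i, y i = lam / mu})
    (S : (Fin R → ℝ) → ℝ)
    (hS : ∀ y, S y = (∑ i, y i * ℓ i (y i)) + (1 / β) * ∑ i, y i * Real.log (y i)) :
    (∃! z : (Fin R → ℝ) × (Fin R → ℝ),
        z.1 = h z.1 z.2 ∧ ∀ i, z.2 i = z.1 i * ℓ' i (z.1 i)) ∧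
    (∀ z : (Fin R → ℝ) × (Fin R → ℝ),
        (z.1 = h z.1 z.2 ∧ ∀ i, z.2 i = z.1 i * ℓ' i (z.1 i)) →
        IsMinOn S Δ z.1) := by
  have hM : 0 < lam / mu := div_pos hlam hmu
  generalize lam / mu = M at *
  have : Nonempty (Fin R) := ⟨⟨0, hR⟩⟩
  have hmono i : StrictMono (levelMap β (ℓ i) (ℓ' i)) :=
    levelMap_strictMono hβ (hderiv i) (hpos i) (hconv i)
  have hsurj i : Function.Surjective (levelMap β (ℓ i) (ℓ' i)) :=
    levelMap_surjective hβ (hderiv i) (hcont i) (hpos i) (hconv i)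
  have char : ∀ z : (Fin R → ℝ) × (Fin R → ℝ),
      (z.1 = h z.1 z.2 ∧ ∀ i, z.2 i = z.1 i * ℓ' i (z.1 i)) →
      (∀ i, 0 < z.1 i) ∧ ∑ i, z.1 i = M ∧
        ∃ t, ∀ i, log (z.1 i) + β * (ℓ i (z.1 i) + z.1 i * ℓ' i (z.1 i)) = t := by
    rintro ⟨x, p⟩ ⟨h1, h2⟩
    dsimp only at h1 h2 ⊢
    obtain ⟨hx, hs, t, ht⟩ := exists_level hR (β := β) hM (x := x) (a := fun i => ℓ i (x i) + p i)
      (fun i => (congrFun h1 i).trans (hdef x p i))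
    exact ⟨hx, hs, t, fun i => by rw [← h2 i]; exact ht i⟩
  -- `e i` is the order isomorphism sending log-flow to level, so `exp ((e i).symm t)` is the flow
  -- on link `i` at level `t`.
  let e i : ℝ ≃o ℝ := (hmono i).orderIsoOfSurjective _ (hsurj i)
  have he i u : e i u = levelMap β (ℓ i) (ℓ' i) u := rfl
  have hflow : ∀ (i : Fin R) (x t : ℝ), 0 < x →
      log x + β * (ℓ i x + x * ℓ' i x) = t → x = exp ((e i).symm t) := by
    intro i x t hx ht
    have : e i (log x) = t := by rw [he, levelMap, exp_log hx, ht]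
    rw [← this, OrderIso.symm_apply_apply, exp_log hx]
  refine ⟨?_, ?_⟩
  · have hcontG : Continuous fun t => ∑ i, exp ((e i).symm t) :=
      continuous_finsetSum _ fun i _ => continuous_exp.comp (e i).symm.continuous
    -- A level at which no link carries more than `M / R`.
    obtain ⟨a, ha⟩ : ∃ a, ∑ i, exp ((e i).symm a) ≤ M := by
      refine ⟨Finset.univ.inf' Finset.univ_nonempty fun i => e i (log (M / R)), ?_⟩
      have hR' : (0 : ℝ) < R := by exact_mod_cast hR
      have hb : ∀ i ∈ (Finset.univ : Finset (Fin R)), exp ((e i).symm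
          (Finset.univ.inf' Finset.univ_nonempty fun i => e i (log (M / R)))) ≤ M / R := by
        intro i hi
        rw [← exp_log (div_pos hM hR'), exp_le_exp, OrderIso.symm_apply_le, exp_log (div_pos hM hR')]
        exact Finset.inf'_le _ hi
      refine (Finset.sum_le_sum hb).trans_eq ?_
      simp only [Finset.sum_const, Finset.card_univ, Fintype.card_fin, nsmul_eq_mul]
      field_simp
    -- A level at which a single link already carries `M`.
    obtain ⟨b, hb⟩ : ∃ b, M ≤ ∑ i, exp ((e i).symm b) := by
      let i₀ : Fin R := ⟨0, hR⟩
      refine ⟨e i₀ (log M), ?_⟩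
      calc M = exp ((e i₀).symm (e i₀ (log M))) := by
              rw [OrderIso.symm_apply_apply, exp_log hM]
        _ ≤ _ := Finset.single_le_sum (f := fun i => exp ((e i).symm (e i₀ (log M))))
              (fun i _ => (exp_pos _).le) (Finset.mem_univ i₀)
    obtain ⟨t, ht⟩ := mem_range_of_exists_le_of_exists_ge hcontG ⟨a, ha⟩ ⟨b, hb⟩
    let x : Fin R → ℝ := fun i => exp ((e i).symm t)
    refine ⟨(x, fun i => x i * ℓ' i (x i)), ⟨?_, fun i => rfl⟩, ?_⟩
    · funext i
      dsimp only
      rw [hdef]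
      refine logit_of_level (t := t) (a := fun i => ℓ i (x i) + x i * ℓ' i (x i)) hM
        (fun i => exp_pos _) ht (fun i => ?_) i
      have : e i ((e i).symm t) = t := OrderIso.apply_symm_apply _ _
      simpa only [he, levelMap, x, log_exp] using this
    · rintro ⟨y, q⟩ hz
      obtain ⟨hy, hsum, s, hs⟩ := char _ hz
      have hyi : ∀ i, y i = exp ((e i).symm s) := fun i => hflow i _ _ (hy i) (hs i)
      have hst : s = t := by
        have hG : StrictMono fun t => ∑ i, exp ((e i).symm t) := fun a b hab =>
          Finset.sum_lt_sum_of_nonempty Finset.univ_nonempty fun i _ =>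
            exp_lt_exp.2 ((e i).symm.strictMono hab)
        refine hG.injective ?_
        dsimp only at hsum ht ⊢
        rw [ht, ← hsum]
        exact Finset.sum_congr rfl fun i _ => (hyi i).symm
      have hyx : y = x := by funext i; rw [hyi i, hst]
      have hq : q = fun i => y i * ℓ' i (y i) := funext hz.2
      rw [hq, hyx]
  · intro z hz
    obtain ⟨hx, hsum, t, ht⟩ := char z hz
    rw [isMinOn_iff, hΔ]
    rintro y ⟨hy, hysum⟩
    rw [hS, hS, Finset.mul_sum, Finset.mul_sum, ← Finset.sum_add_distrib,
      ← Finset.sum_add_distrib]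
    have hle := Finset.sum_le_sum fun i (_ : i ∈ Finset.univ) =>
      cost_tangent_le hβ (hderiv i) (hpos i) (hconv i) (hx i) (hy i)
    simp_rw [ht] at hle
    rw [Finset.sum_add_distrib, ← Finset.sum_mul, Finset.sum_sub_distrib, hysum, hsum, sub_self,
      zero_mul, add_zero] at hle
    exact hle
end

section
/- Invertibility of the equilibrium Jacobian matrix: let R ≥ 1, β > 0, let m ∈ ℝ^R have strictly positive entries and set M = diag(m), and let v ∈ ℝ^R have strictly positive entries with 𝟙ᵀv = 1 (where 𝟙 is the all-ones vector). Then the R×R real matrix ((M⁻¹ + β I) − β v 𝟙ᵀ) · M is invertible. -/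
/-! The matrix is the product of `A = (M⁻¹ + βI) − β v 𝟙ᵀ` and the invertible diagonal matrix `M`,
so it suffices that `A` is invertible. Column `k` of `A` has diagonal entry
`(m k)⁻¹ + β (1 - v k)`, while its off-diagonal entries `-β v i` have absolute values adding up to
`β (1 - v k)` because `v` sums to one. Thus `A` is strictly diagonally dominant by columns, and
Gershgorin's theorem (`det_ne_zero_of_sum_col_lt_diag`) gives `det A ≠ 0`. -/

/-- Invertibility of the equilibrium Jacobian matrix `((M⁻¹ + βI) − β v 𝟙ᵀ) M`. -/
theorem stmt_12
    (R : ℕ) (hR : 1 ≤ R)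
    (β : ℝ) (hβ : 0 < β)
    (m v : Fin R → ℝ)
    (hm : ∀ i, 0 < m i)
    (hv : ∀ i, 0 < v i) (hvsum : ∑ i, v i = 1) :
    IsUnit ((((Matrix.diagonal m)⁻¹ + β • (1 : Matrix (Fin R) (Fin R) ℝ))
        - β • Matrix.of (fun i _ : Fin R => v i)) * Matrix.diagonal m) := by
  have hinv : (Matrix.diagonal m)⁻¹ = Matrix.diagonal (fun i => (m i)⁻¹) := by
    apply Matrix.inv_eq_right_inv
    rw [Matrix.diagonal_mul_diagonal, ← Matrix.diagonal_one]
    congr 1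
    funext i
    exact mul_inv_cancel₀ (hm i).ne'
  rw [hinv]
  refine IsUnit.mul ?_ ?_
  · rw [Matrix.isUnit_iff_isUnit_det, isUnit_iff_ne_zero]
    apply det_ne_zero_of_sum_col_lt_diag
    intro k
    have hoff : ∑ i ∈ Finset.univ.erase k, v i = 1 - v k := by
      rw [← hvsum, ← Finset.add_sum_erase _ v (Finset.mem_univ k), add_sub_cancel_left]
    have hmk : 0 < (m k)⁻¹ := inv_pos.mpr (hm k)
    calc _ = ∑ i ∈ Finset.univ.erase k, β * v i := by
          refine Finset.sum_congr rfl fun i hi => ?_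
          have hik : i ≠ k := Finset.ne_of_mem_erase hi
          simp [hik, abs_of_pos hβ, abs_of_pos (hv i)]
      _ = β * (1 - v k) := by rw [← Finset.mul_sum, hoff]
      _ < (m k)⁻¹ + β * (1 - v k) := by linarith
      _ = (m k)⁻¹ + β - β * v k := by ring
      _ ≤ |(m k)⁻¹ + β - β * v k| := le_abs_self _
      _ = _ := by simp
  · rw [Matrix.isUnit_iff_isUnit_det, Matrix.det_diagonal, isUnit_iff_ne_zero]
    exact Finset.prod_ne_zero_iff.mpr fun i _ => (hm i).ne'
end

section
/- Equal-sign property of off-diagonal equilibrium sensitivities: for every p ∈ ℝ^R and all pairwise distinct indices i, j, k ∈ {1,…,R}, the partial derivatives of the stochastic user equilibrium map satisfy (∂x̄_i(p)/∂p_k) · (∂x̄_j(p)/∂p_k) > 0. -/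
/-!
Write the equilibrium equation in logarithmic form:
`log x̄ₘ + β (ℓₘ(x̄ₘ) + pₘ)` is the same for all links `m`. Differentiating in the direction `e_k`
shows that `aₘ · ∂x̄ₘ/∂p_k`, with `aₘ = 1/x̄ₘ + β ℓₘ'(x̄ₘ) > 0`, takes a common value `c` over all
`m ≠ k`. If `c` were zero, every off-diagonal sensitivity would vanish, and then so would the
diagonal one, because flow conservation makes the sensitivities sum to zero; this contradicts
`∂x̄_k/∂p_k < 0`. Hence `c ≠ 0`, and all off-diagonal sensitivities have the sign of `c`.
-/

open Real

/-- Equal-sign property of the off-diagonal equilibrium sensitivities: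
for pairwise distinct `i, j, k`, `(∂x̄ᵢ(p)/∂p_k) · (∂x̄ⱼ(p)/∂p_k) > 0`. -/
theorem stmt_13
    (R : ℕ) (hR : 3 ≤ R)
    (β lam mu : ℝ) (hβ : 0 < β) (hlam : 0 < lam) (hmu : 0 < mu) (hmu1 : mu < 1)
    (ℓ ℓ' : Fin R → ℝ → ℝ)
    (hderiv : ∀ i x, HasDerivAt (ℓ i) (ℓ' i x) x)
    (hcont : ∀ i, Continuous (ℓ' i))
    (hpos : ∀ i x, 0 < ℓ' i x)
    (hconv : ∀ i, Monotone (ℓ' i))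
    (h : (Fin R → ℝ) → (Fin R → ℝ) → Fin R → ℝ)
    (hdef : ∀ x p i, h x p i =
      (lam / mu) * Real.exp (-β * (ℓ i (x i) + p i)) /
        ∑ j, Real.exp (-β * (ℓ j (x j) + p j)))
    (xbar : (Fin R → ℝ) → Fin R → ℝ)
    (hsmooth : ContDiff ℝ 1 xbar)
    (hfix : ∀ p, xbar p = h (xbar p) p)
    (hxpos : ∀ p i, 0 < xbar p i)
    (hxsum : ∀ p, ∑ i, xbar p i = lam / mu)
    (hdiag : ∀ (p : Fin R → ℝ) (i : Fin R), fderiv ℝ xbar p (Pi.single i 1) i < 0) :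
    ∀ (p : Fin R → ℝ) (i j k : Fin R), i ≠ j → j ≠ k → i ≠ k →
      0 < fderiv ℝ xbar p (Pi.single k 1) i * fderiv ℝ xbar p (Pi.single k 1) j := by
  intro p i j k hij hjk hik
  have hlm : 0 < lam / mu := div_pos hlam hmu
  have hlog : ∀ q m, Real.log (xbar q m) + β * (ℓ m (xbar q m) + q m) =
      Real.log (lam / mu) - Real.log (∑ n, Real.exp (-β * (ℓ n (xbar q n) + q n))) := by
    intro q m
    have hS : 0 < ∑ n, Real.exp (-β * (ℓ n (xbar q n) + q n)) :=
      Finset.sum_pos (fun n _ => Real.exp_pos _) ⟨m, Finset.mem_univ m⟩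
    have hx : xbar q m = (lam / mu) * Real.exp (-β * (ℓ m (xbar q m) + q m)) /
        ∑ n, Real.exp (-β * (ℓ n (xbar q n) + q n)) := by
      rw [← hdef, ← hfix]
    have hl := congrArg Real.log hx
    rw [Real.log_div (mul_pos hlm (Real.exp_pos _)).ne' hS.ne',
      Real.log_mul hlm.ne' (Real.exp_pos _).ne', Real.log_exp] at hl
    linarith
  have hcurve : ∀ m, HasDerivAt (fun t : ℝ => xbar (p + t • Pi.single k (1 : ℝ)) m)
      (fderiv ℝ xbar p (Pi.single k 1) m) 0 := by
    have hf : HasFDerivAt xbar (fderiv ℝ xbar p) p :=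
      (hsmooth.differentiable one_ne_zero p).hasFDerivAt
    exact hasDerivAt_pi.1 (hf.hasLineDerivAt (Pi.single k (1 : ℝ)))
  have hsum : ∑ m, fderiv ℝ xbar p (Pi.single k 1) m = 0 := by
    have h1 := HasDerivAt.fun_sum (u := Finset.univ) (fun m _ => hcurve m)
    simp only [hxsum] at h1
    exact h1.unique (hasDerivAt_const (0 : ℝ) (lam / mu))
  have hk := hdiag p k
  set D := fderiv ℝ xbar p (Pi.single k 1)
  have ha : ∀ m, 0 < (xbar p m)⁻¹ + β * ℓ' m (xbar p m) := fun m =>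
    add_pos (inv_pos.2 (hxpos p m)) (mul_pos hβ (hpos m _))
  have hlogderiv : ∀ m, HasDerivAt (fun t : ℝ =>
      Real.log (xbar (p + t • Pi.single k (1 : ℝ)) m) +
        β * ℓ m (xbar (p + t • Pi.single k (1 : ℝ)) m))
      (((xbar p m)⁻¹ + β * ℓ' m (xbar p m)) * D m) 0 := by
    intro m
    have hne : xbar (p + (0 : ℝ) • Pi.single k (1 : ℝ)) m ≠ 0 := (hxpos _ m).ne'
    have h2 := ((hcurve m).log hne).add
      (((hderiv m _).comp (0 : ℝ) (hcurve m)).const_mul β)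
    refine h2.congr_deriv ?_
    simp only [zero_smul, add_zero]
    ring
  have hcommon : ∀ m n, m ≠ k → n ≠ k →
      ((xbar p m)⁻¹ + β * ℓ' m (xbar p m)) * D m =
        ((xbar p n)⁻¹ + β * ℓ' n (xbar p n)) * D n := by
    intro m n hm hn
    -- Along the line `p + t e_k` the prices `pₘ`, `pₙ` are fixed, so the two functions
    -- differ by the constant `β (pₙ - pₘ)`.
    have h3 := (hlogderiv n).add_const (β * (p n - p m))
    refine (hlogderiv m).unique (h3.congr_of_eventuallyEq (Filter.Eventually.of_forall ?_))
    intro t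
    have em := hlog (p + t • Pi.single k (1 : ℝ)) m
    have en := hlog (p + t • Pi.single k (1 : ℝ)) n
    have qm : (p + t • Pi.single k (1 : ℝ) : Fin R → ℝ) m = p m := by simp [hm]
    have qn : (p + t • Pi.single k (1 : ℝ) : Fin R → ℝ) n = p n := by simp [hn]
    rw [qm] at em
    rw [qn] at en
    simp only
    linarith
  have hi : D i ≠ 0 := by
    intro h0
    have hz : ∀ m, m ≠ k → D m = 0 := by
      intro m hm
      have h4 := hcommon m i hm hik
      rw [h0, mul_zero] at h4
      exact (mul_eq_zero.1 h4).resolve_left (ha m).ne'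
    rw [Finset.sum_eq_single k (fun m _ hm => hz m hm) (by simp)] at hsum
    exact hk.ne hsum
  have hji := hcommon i j hik hjk
  have hDj : D j = ((xbar p i)⁻¹ + β * ℓ' i (xbar p i)) /
      ((xbar p j)⁻¹ + β * ℓ' j (xbar p j)) * D i := by
    rw [div_mul_eq_mul_div, eq_div_iff (ha j).ne']
    linarith
  rw [hDj, mul_left_comm]
  exact mul_pos (div_pos (ha i) (ha j)) (mul_self_pos.2 hi)
end

section
/- Cooperativity of the toll dynamics: for every p ∈ ℝ^R and every k ∈ {1,…,R}, the equilibrium sensitivities satisfy Σ_{l ≠ k} ∂x̄_l(p)/∂p_k = − ∂x̄_k(p)/∂p_k > 0, and for every i ≠ k, ∂x̄_i(p)/∂p_k > 0. -/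
open Real

/-!
Taking logarithms in the logit fixed-point equation shows that
`log x̄ᵢ + β (ℓᵢ(x̄ᵢ) + pᵢ)` does not depend on `i`. Differentiating in the direction `p_k`, the
quantity `(1 / x̄ᵢ + β ℓᵢ'(x̄ᵢ)) ∂x̄ᵢ/∂p_k` is the same for all `i ≠ k`. Its first factor is positive,
so the sensitivities with `i ≠ k` all have the same sign. Conservation of mass makes their sum equal
to `-∂x̄_k/∂p_k > 0`, so the common sign is positive.
-/

/-- Cooperativity of the toll dynamics: `Σ_{l ≠ k} ∂x̄_l(p)/∂p_k = −∂x̄_k(p)/∂p_k > 0`, and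
`∂x̄ᵢ(p)/∂p_k > 0` for every `i ≠ k`. -/
theorem stmt_14
    (R : ℕ) (hR : 2 ≤ R)
    (β lam mu : ℝ) (hβ : 0 < β) (hlam : 0 < lam) (hmu : 0 < mu) (hmu1 : mu < 1)
    (ℓ ℓ' : Fin R → ℝ → ℝ)
    (hderiv : ∀ i x, HasDerivAt (ℓ i) (ℓ' i x) x)
    (hcont : ∀ i, Continuous (ℓ' i))
    (hpos : ∀ i x, 0 < ℓ' i x)
    (hconv : ∀ i, Monotone (ℓ' i))
    (h : (Fin R → ℝ) → (Fin R → ℝ) → Fin R → ℝ)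
    (hdef : ∀ x p i, h x p i =
      (lam / mu) * Real.exp (-β * (ℓ i (x i) + p i)) /
        ∑ j, Real.exp (-β * (ℓ j (x j) + p j)))
    (xbar : (Fin R → ℝ) → Fin R → ℝ)
    (hsmooth : ContDiff ℝ 1 xbar)
    (hfix : ∀ p, xbar p = h (xbar p) p)
    (hxpos : ∀ p i, 0 < xbar p i)
    (hxsum : ∀ p, ∑ i, xbar p i = lam / mu)
    (hdiag : ∀ (p : Fin R → ℝ) (i : Fin R), fderiv ℝ xbar p (Pi.single i 1) i < 0) :
    ∀ (p : Fin R → ℝ) (k : Fin R),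
      (∑ l ∈ Finset.univ.erase k, fderiv ℝ xbar p (Pi.single k 1) l
          = - fderiv ℝ xbar p (Pi.single k 1) k) ∧
      (0 < - fderiv ℝ xbar p (Pi.single k 1) k) ∧
      (∀ i : Fin R, i ≠ k → 0 < fderiv ℝ xbar p (Pi.single k 1) i) := by
  intro p k
  set v := fderiv ℝ xbar p (Pi.single k 1) with hv
  let γ : ℝ → Fin R → ℝ := fun t => p + t • Pi.single k 1
  have hγ0 : γ 0 = p := by simp [γ]
  have hy : HasDerivAt (fun t => xbar (γ t)) v 0 := by
    have hγ : HasDerivAt γ (Pi.single k 1) 0 := by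
      simpa [γ] using
        ((hasDerivAt_id (0 : ℝ)).smul_const (Pi.single k 1 : Fin R → ℝ)).const_add p
    have hx : HasFDerivAt xbar (fderiv ℝ xbar p) (γ 0) := by
      rw [hγ0]
      exact (hsmooth.differentiable one_ne_zero p).hasFDerivAt
    exact hx.comp_hasDerivAt 0 hγ
  have hyi : ∀ i, HasDerivAt (fun t => xbar (γ t) i) (v i) 0 := hasDerivAt_pi.1 hy
  have hsum : ∑ i, v i = 0 := by
    have h1 : HasDerivAt (fun t => ∑ i, xbar (γ t) i) (∑ i, v i) 0 :=
      HasDerivAt.fun_sum fun i _ => hyi i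
    simp only [hxsum] at h1
    exact h1.unique (hasDerivAt_const _ _)
  have hkneg : v k < 0 := hdiag p k
  have herase : ∑ l ∈ Finset.univ.erase k, v l = - v k := by
    have h2 := Finset.add_sum_erase Finset.univ v (Finset.mem_univ k)
    linarith
  refine ⟨herase, by linarith, ?_⟩
  have hlog : ∀ q i, Real.log (xbar q i) + β * ℓ i (xbar q i) = Real.log (lam / mu) - β * q i
      - Real.log (∑ j, Real.exp (-β * (ℓ j (xbar q j) + q j))) := by
    intro q i
    have hS : 0 < ∑ j, Real.exp (-β * (ℓ j (xbar q j) + q j)) :=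
      Finset.sum_pos (fun j _ => Real.exp_pos _) ⟨i, Finset.mem_univ i⟩
    have hL : lam / mu ≠ 0 := (div_pos hlam hmu).ne'
    have h3 : xbar q i = _ := (congrFun (hfix q) i).trans (hdef (xbar q) q i)
    have h4 := congrArg Real.log h3
    rw [Real.log_div (mul_ne_zero hL (Real.exp_ne_zero _)) hS.ne',
      Real.log_mul hL (Real.exp_ne_zero _), Real.log_exp] at h4
    linarith
  have hg : ∀ i, HasDerivAt (fun t => Real.log (xbar (γ t) i) + β * ℓ i (xbar (γ t) i))
      ((1 / xbar p i + β * ℓ' i (xbar p i)) * v i) 0 := by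
    intro i
    have h5 := (hyi i).log (hxpos _ i).ne'
    have h6 := ((hderiv i (xbar (γ 0) i)).comp (0 : ℝ) (hyi i)).const_mul β
    have h7 := h5.add h6
    rw [hγ0] at h7
    exact h7.congr_deriv (by ring)
  have hfac : ∀ i, 0 < 1 / xbar p i + β * ℓ' i (xbar p i) := fun i =>
    add_pos (one_div_pos.2 (hxpos p i)) (mul_pos hβ (hpos i _))
  have hsame : ∀ i j, i ≠ k → j ≠ k → (1 / xbar p i + β * ℓ' i (xbar p i)) * v i
      = (1 / xbar p j + β * ℓ' j (xbar p j)) * v j := by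
    intro i j hi hj
    -- Along `γ` only the `k`-th toll moves, so the two potentials differ by a constant.
    have h8 : (fun t => Real.log (xbar (γ t) i) + β * ℓ i (xbar (γ t) i)) = fun t =>
        (Real.log (xbar (γ t) j) + β * ℓ j (xbar (γ t) j)) + β * (p j - p i) := by
      funext t
      have hpi : γ t i = p i := by simp [γ, hi]
      have hpj : γ t j = p j := by simp [γ, hj]
      rw [hlog, hlog, hpi, hpj]
      ring
    have h9 := hg i
    rw [h8] at h9
    exact h9.unique ((hg j).add_const _)
  obtain ⟨j, hj, hjpos⟩ : ∃ j ∈ Finset.univ.erase k, 0 < v j := by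
    by_contra! hcon
    have := Finset.sum_nonpos hcon
    linarith
  intro i hi
  have h10 := mul_pos (hfac j) hjpos
  rw [← hsame i j hi (Finset.ne_of_mem_erase hj)] at h10
  exact (mul_pos_iff_of_pos_left (hfac i)).1 h10
end
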